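/- arXiv:1601.00399 — 2 statements merged into one kernel-verified Lean document; each statement's English description precedes it below -/
import Mathlib

section
/- MRA decomposition (existence and uniqueness): For every A ⊆ [n] with |A| ≥ 2 and every F ∈ L(Γ(A)), there exists a unique family (X_B)_{B∈P̄(A)} with X_B ∈ H_B for each B ∈ P̄(A) such that F = Σ_{B∈P̄(A)} φ_A X_B. Equivalently, L(Γ(A)) decomposes as the direct sum ⊕_{B∈P̄(A)} φ_A(H_B). -/
open Finset
open scoped List

abbrev Word (n : ℕ) := List (Fin n)

/-- `Γ(A)`: duplicate-free words whose set of letters is exactly `A`. -/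
noncomputable def rankings (n : ℕ) (A : Finset (Fin n)) : Finset (Word n) :=
  A.toList.permutations.toFinset

/-- All duplicate-free words on `[n]`. -/
noncomputable def allWords (n : ℕ) : Finset (Word n) :=
  Finset.univ.biUnion fun A : Finset (Fin n) => rankings n A

def IsRanking {n : ℕ} (A : Finset (Fin n)) (w : Word n) : Prop :=
  w.Nodup ∧ w.toFinset = A

instance {n : ℕ} (A : Finset (Fin n)) (w : Word n) : Decidable (IsRanking A w) :=
  inferInstanceAs (Decidable (w.Nodup ∧ w.toFinset = A))

/-- Membership in `L(Γ(A))`: functions supported on `Γ(A)`. -/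
def MemL {n : ℕ} (A : Finset (Fin n)) (F : Word n → ℝ) : Prop :=
  ∀ w, F w ≠ 0 → IsRanking A w

/-- Marginal operator `M_B` (with the convention `M_∅ F = (Σ F)·δ_0̄`). -/
noncomputable def marg {n : ℕ} (B : Finset (Fin n)) (F : Word n → ℝ) : Word n → ℝ :=
  fun π => if IsRanking B π then ∑ σ ∈ allWords n, (if π <+ σ then F σ else 0) else 0

/-- Membership in the localization space `H_B` (for `B = ∅` this is `L(Γ(∅)) = ℝ·δ_0̄`). -/
def MemH {n : ℕ} (B : Finset (Fin n)) (F : Word n → ℝ) : Prop :=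
  MemL B F ∧
    (∀ B' : Finset (Fin n), B' ⊂ B → 2 ≤ B'.card → marg B' F = 0) ∧
    (2 ≤ B.card → ∑ π ∈ rankings n B, F π = 0)

/-- `P̄(A) = {B ⊆ A : |B| ≥ 2} ∪ {∅}`. -/
def Pbar {n : ℕ} (A : Finset (Fin n)) : Finset (Finset (Fin n)) :=
  A.powerset.filter fun B => 2 ≤ B.card ∨ B = ∅

/-- Synthesis operator `φ_A`. -/
noncomputable def synth {n : ℕ} (A : Finset (Fin n)) (F : Word n → ℝ) : Word n → ℝ :=
  fun σ =>
    if IsRanking A σ then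
      F [] / (Nat.factorial A.card : ℝ) +
        ∑ π ∈ allWords n,
          (if π ≠ [] ∧ π <:+: σ then F π / (Nat.factorial (A.card - π.length + 1) : ℝ) else 0)
    else 0

/-- Dirac function `δ_π`. -/
noncomputable def dirac {n : ℕ} (π : Word n) : Word n → ℝ :=
  fun w => if w = π then 1 else 0

/-- `σ|_C`: the induced word of `σ` on `C`. -/
def restrictWord {n : ℕ} (σ : Word n) (C : Finset (Fin n)) : Word n :=
  σ.filter fun a => decide (a ∈ C)

/-!
The synthesis operators intertwine with the marginals: for `X ∈ L(Γ(B))` and `B, C ⊆ A`,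
`M_C φ_A X = φ_C M_{B ∩ C} X`. It is enough to remove one letter `a` from `A`. The marginal then
sums over all insertions of `a` into a word, and one has to count infixes of the extended words:
those containing `a` come from insertions of `a` into infixes of the original word, and those
avoiding `a` are the infixes of the original word not split by the insertion.

For `X ∈ H_B` the right-hand side is `φ_C X` if `B ⊆ C` and `0` otherwise. Hence
`F = Σ_B φ_A X_B` forces `M_C F = Σ_{B ⊆ C} φ_C X_B` for every `C`, a system that is triangular for
inclusion because `φ_C X_C = X_C`. Its unique solution is the decomposition.
-/

section WordSums

variable {α M : Type*} [AddCommMonoid M]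

/-- The sum of `F` over all prefixes of `s`, the empty one included. -/
def prefixSum (F : List α → M) (s : List α) : M := (s.inits.map F).sum

/-- The sum of `F` over all infixes of `s`, counted with the positions where they occur; in
particular the empty word is counted `s.length + 1` times. -/
def infixSum (F : List α → M) (s : List α) : M := (s.tails.map (prefixSum F)).sum

/-- The sum of `F` over all words obtained by inserting the letter `a` into `s`; on functions of
rankings, it is the marginal that forgets `a`. -/
def insertSum (a : α) (F : List α → M) (s : List α) : M := ((s.permutations'Aux a).map F).sum

@[simp]
lemma prefixSum_nil (F : List α → M) : prefixSum F [] = F [] := by simp [prefixSum]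

@[simp]
lemma prefixSum_cons (F : List α → M) (x : α) (s : List α) :
    prefixSum F (x :: s) = F [] + prefixSum (fun w => F (x :: w)) s := by
  simp [prefixSum, Function.comp_def]

@[simp]
lemma infixSum_nil (F : List α → M) : infixSum F [] = F [] := by simp [infixSum]

@[simp]
lemma infixSum_cons (F : List α → M) (x : α) (s : List α) :
    infixSum F (x :: s) = prefixSum F (x :: s) + infixSum F s := by
  simp only [infixSum, List.tails_cons, List.map_cons, List.sum_cons]

@[simp]
lemma insertSum_nil (a : α) (F : List α → M) : insertSum a F [] = F [a] := by simp [insertSum]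

@[simp]
lemma insertSum_cons (a : α) (F : List α → M) (x : α) (s : List α) :
    insertSum a F (x :: s) = F (a :: x :: s) + insertSum a (fun w => F (x :: w)) s := by
  simp [insertSum, Function.comp_def]

lemma prefixSum_add (F G : List α → M) (s : List α) :
    prefixSum (fun w => F w + G w) s = prefixSum F s + prefixSum G s :=
  List.sum_map_add

lemma insertSum_add (a : α) (F G : List α → M) (s : List α) :
    insertSum a (fun w => F w + G w) s = insertSum a F s + insertSum a G s :=
  List.sum_map_add

lemma insertSum_const (a : α) (c : M) (s : List α) :
    insertSum a (fun _ => c) s = (s.length + 1) • c := by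
  simp [insertSum]

lemma prefixSum_eq_zero {F : List α → M} {s : List α} (h : ∀ w, w <+: s → F w = 0) :
    prefixSum F s = 0 :=
  List.sum_eq_zero (by simpa using h)

lemma infixSum_eq_zero {F : List α → M} {s : List α} (h : ∀ w, w <:+: s → F w = 0) :
    infixSum F s = 0 :=
  List.sum_eq_zero (by
    simpa using fun t ht => prefixSum_eq_zero fun w hw => h w (hw.isInfix.trans ht.isInfix))

lemma prefixSum_eq_self {F : List α → M} {s : List α} (h : ∀ w, w <+: s → w ≠ s → F w = 0) :
    prefixSum F s = F s := by
  induction s generalizing F with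
  | nil => exact prefixSum_nil F
  | cons x s ih =>
    rw [prefixSum_cons, h [] (by simp) (by simp), zero_add]
    exact ih fun w hw hws => h _ (List.cons_prefix_cons.2 ⟨rfl, hw⟩) (by simpa using hws)

lemma infixSum_eq_self {F : List α → M} {s : List α} (h : ∀ w, w <:+: s → w ≠ s → F w = 0) :
    infixSum F s = F s := by
  cases s with
  | nil => exact infixSum_nil F
  | cons x s =>
    have h_tail : infixSum F s = 0 := infixSum_eq_zero fun w hw =>
      h w (List.infix_cons hw) fun h_eq => by simpa [h_eq] using hw.length_le
    rw [infixSum_cons, h_tail, add_zero, prefixSum_eq_self fun w hw => h w hw.isInfix]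

lemma prefixSum_nsmul (k : ℕ) (F : List α → M) (s : List α) :
    prefixSum (fun w => k • F w) s = k • prefixSum F s := by
  simp only [prefixSum, List.smul_sum, List.map_map, Function.comp_def]

lemma infixSum_nsmul (k : ℕ) (F : List α → M) (s : List α) :
    infixSum (fun w => k • F w) s = k • infixSum F s := by
  simp only [infixSum, funext (prefixSum_nsmul k F), List.smul_sum, List.map_map, Function.comp_def]

lemma insertSum_prefixSum_of_mem {a : α} {F : List α → M} (hF : ∀ w, a ∉ w → F w = 0)
    {s : List α} (hs : a ∉ s) :
    insertSum a (prefixSum F) s = prefixSum (insertSum a F) s := by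
  induction s generalizing F with
  | nil => simp [hF]
  | cons x s ih =>
    obtain ⟨hx, hs⟩ := not_or.1 (List.mem_cons.not.1 hs)
    have hFx : ∀ w, a ∉ w → F (x :: w) = 0 := fun w hw => hF _ (by simp [hx, hw])
    simp [hF, prefixSum_add, ih hFx hs, add_assoc]

lemma insertSum_infixSum_of_mem {a : α} {F : List α → M} (hF : ∀ w, a ∉ w → F w = 0)
    {s : List α} (hs : a ∉ s) :
    insertSum a (infixSum F) s = infixSum (insertSum a F) s := by
  induction s with
  | nil => simp [hF]
  | cons x s ih =>
    have h_infixes : infixSum F (x :: s) = 0 :=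
      infixSum_eq_zero fun w hw => hF w fun haw => hs (hw.subset haw)
    have h_prefixes := insertSum_prefixSum_of_mem hF hs
    rw [insertSum_cons] at h_prefixes
    rw [insertSum_cons, infixSum_cons F a, h_infixes, infixSum_cons (insertSum a F), ← h_prefixes,
      ← ih (fun h => hs (List.mem_cons_of_mem x h)), add_zero]
    simp only [infixSum_cons F x, insertSum_add, add_assoc]

lemma prefixSum_cons_eq_apply_nil {a : α} {F : List α → M} (hF : ∀ w, a ∈ w → F w = 0)
    (s : List α) : prefixSum F (a :: s) = F [] := by
  rw [prefixSum_cons, prefixSum_eq_zero fun w _ => hF _ List.mem_cons_self, add_zero]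

-- An occurrence of `w` in `s` survives every insertion outside of it, and there are
-- `s.length + 1 - w.length` of those for a prefix; the length is moved to the left-hand side.
lemma insertSum_prefixSum_of_notMem {a : α} {F : List α → M} (hF : ∀ w, a ∈ w → F w = 0)
    (s : List α) :
    insertSum a (prefixSum F) s + prefixSum (fun w => w.length • F w) s =
      (s.length + 1) • prefixSum F s := by
  induction s generalizing F with
  | nil => simp [hF]
  | cons x s ih =>
    have hFx : ∀ w, a ∈ w → F (x :: w) = 0 := fun w hw => hF _ (List.mem_cons_of_mem x hw)
    have h_length : prefixSum (fun w => w.length • F w) (x :: s) =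
        prefixSum (fun w => w.length • F (x :: w)) s + prefixSum (fun w => F (x :: w)) s := by
      simp [add_smul, prefixSum_add]
    rw [insertSum_cons, prefixSum_cons_eq_apply_nil hF, h_length, prefixSum_cons F x s]
    simp only [prefixSum_cons F x, insertSum_add, insertSum_const]
    calc
      _ = (s.length + 2) • F [] + (insertSum a (prefixSum fun w => F (x :: w)) s +
            prefixSum (fun w => w.length • F (x :: w)) s) + prefixSum (fun w => F (x :: w)) s := by
        module
      _ = _ := by rw [ih hFx, List.length_cons]; module

lemma insertSum_infixSum_of_notMem {a : α} {F : List α → M} (hF : ∀ w, a ∈ w → F w = 0)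
    (s : List α) :
    insertSum a (infixSum F) s + infixSum (fun w => w.length • F w) s =
      (s.length + 2) • infixSum F s := by
  induction s with
  | nil => simp [hF, two_smul]
  | cons x s ih =>
    have h_prefixes := insertSum_prefixSum_of_notMem hF (x :: s)
    rw [insertSum_cons, prefixSum_cons_eq_apply_nil hF] at h_prefixes
    rw [insertSum_cons, infixSum_cons F a, prefixSum_cons_eq_apply_nil hF]
    simp only [infixSum_cons _ x, insertSum_add]
    calc
      _ = (F [] + insertSum a (fun w => prefixSum F (x :: w)) s +
            prefixSum (fun w => w.length • F w) (x :: s)) +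
          (insertSum a (infixSum F) s + infixSum (fun w => w.length • F w) s) +
          (prefixSum F (x :: s) + infixSum F s) := by
        abel
      _ = _ := by rw [h_prefixes, ih, List.length_cons]; module

lemma nodup_inits (s : List α) : s.inits.Nodup := by
  induction s with
  | nil => simp
  | cons x s ih =>
    rw [List.inits_cons, List.nodup_cons]
    exact ⟨by simp, ih.map List.cons_injective⟩

lemma infixSum_eq_length_smul_add_sum (F : List α → M) {s : List α} (hs : s.Nodup)
    {S : Finset (List α)} (hS : ∀ w, w ∈ S ↔ w ≠ [] ∧ w <:+: s) :
    infixSum F s = (s.length + 1) • F [] + ∑ w ∈ S, F w := by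
  classical
  induction s generalizing S with
  | nil =>
    have h_empty : S = ∅ := by ext w; simp [hS]
    simp [h_empty]
  | cons x s ih =>
    obtain ⟨hxs, hs⟩ := List.nodup_cons.1 hs
    have h_starting : ∑ w ∈ S with ¬w <:+: s, F w = prefixSum (fun w => F (x :: w)) s := by
      have h_eq : S.filter (fun w => ¬w <:+: s) = (s.inits.map (x :: ·)).toFinset := by
        ext w
        cases w with
        | nil => simp [hS]
        | cons y w =>
          have h_mem : y :: w <:+: s → y ∈ s := fun h => h.subset List.mem_cons_self
          simp only [Finset.mem_filter, hS, List.infix_cons_iff, List.cons_prefix_cons,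
            List.mem_toFinset, List.mem_map, List.mem_inits, List.cons.injEq]
          grind
      rw [h_eq, List.sum_toFinset _ ((nodup_inits s).map List.cons_injective), List.map_map]
      rfl
    have h_rest := ih hs (S := S.filter (· <:+: s)) fun w => by
      simp only [Finset.mem_filter, hS, List.infix_cons_iff]
      tauto
    rw [← Finset.sum_filter_add_sum_filter_not S (· <:+: s), h_starting, infixSum_cons, h_rest,
      prefixSum_cons, List.length_cons]
    module

lemma perm_of_mem_permutations'Aux {a : α} {s t : List α} (h : t ∈ s.permutations'Aux a) :
    t ~ a :: s :=
  List.mem_permutations'.1 (List.mem_flatMap.2 ⟨s, List.mem_permutations'.2 .rfl, h⟩)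

lemma mem_permutations'Aux_iff_erase [DecidableEq α] {a : α} {s t : List α} (ha : a ∉ s) :
    t ∈ s.permutations'Aux a ↔ a ∈ t ∧ t.erase a = s := by
  induction s generalizing t with
  | nil => cases t <;> grind [List.permutations'Aux, List.erase_eq_nil_iff]
  | cons x s ih =>
    cases t with
    | nil => simp
    | cons y t =>
      have ih_t := ih (t := t)
      simp only [List.permutations'Aux, List.mem_cons, List.mem_map, List.cons.injEq]
      grind

end WordSums

section Rankings

variable {n : ℕ} {A B C : Finset (Fin n)}

lemma isRanking_iff_perm {w : Word n} : IsRanking A w ↔ w ~ A.toList := by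
  constructor
  · rintro ⟨hw, rfl⟩
    exact (List.toFinset_toList hw).symm
  · intro h
    exact ⟨h.nodup_iff.2 A.nodup_toList, by rw [List.toFinset_eq_of_perm _ _ h, A.toList_toFinset]⟩

lemma isRanking_cons {a : Fin n} {w : Word n} :
    IsRanking A (a :: w) ↔ a ∈ A ∧ IsRanking (A.erase a) w := by
  simp only [IsRanking, List.nodup_cons, List.toFinset_cons, ← List.mem_toFinset (a := a)]
  constructor
  · rintro ⟨⟨haw, hw⟩, rfl⟩
    simp_all
  · rintro ⟨ha, hw, h_erase⟩
    simp_all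

lemma IsRanking.length_eq {w : Word n} (h : IsRanking A w) : w.length = A.card := by
  rw [← h.2, List.toFinset_card_of_nodup h.1]

lemma IsRanking.mem_iff {w : Word n} (h : IsRanking A w) {a : Fin n} : a ∈ w ↔ a ∈ A := by
  rw [← h.2, List.mem_toFinset]

lemma mem_rankings {w : Word n} : w ∈ rankings n A ↔ IsRanking A w := by
  simp [rankings, isRanking_iff_perm]

lemma mem_allWords {w : Word n} : w ∈ allWords n ↔ w.Nodup := by
  simp [allWords, mem_rankings, IsRanking]

lemma isRanking_restrictWord {σ : Word n} (hσ : IsRanking A σ) (hC : C ⊆ A) :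
    IsRanking C (restrictWord σ C) :=
  ⟨hσ.1.filter _, by
    simp [restrictWord, List.toFinset_filter, hσ.2, Finset.filter_mem_eq_inter,
      Finset.inter_eq_right.2 hC]⟩

lemma restrictWord_self {σ : Word n} (hσ : IsRanking A σ) : restrictWord σ A = σ :=
  List.filter_eq_self.2 fun _ ha => decide_eq_true (hσ.mem_iff.1 ha)

lemma restrictWord_erase {σ : Word n} (hσ : IsRanking A σ) (a : Fin n) :
    restrictWord σ (A.erase a) = σ.erase a := by
  rw [hσ.1.erase_eq_filter]
  refine List.filter_congr fun b hb => ?_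
  simp [hσ.mem_iff.1 hb, bne, BEq.beq]

lemma restrictWord_restrictWord (hCB : C ⊆ B) (σ : Word n) :
    restrictWord (restrictWord σ B) C = restrictWord σ C := by
  simp only [restrictWord, List.filter_filter]
  refine List.filter_congr fun a _ => ?_
  rw [← Bool.decide_and, decide_eq_decide]
  exact and_iff_left_of_imp (@hCB a)

lemma sublist_iff_restrictWord_eq {π σ : Word n} (hπ : IsRanking C π) (hσ : IsRanking A σ)
    (hC : C ⊆ A) : π <+ σ ↔ restrictWord σ C = π := by
  constructor
  · intro h
    have h_sub : π <+ restrictWord σ C := by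
      rw [← restrictWord_self hπ]
      exact h.filter _
    exact (h_sub.eq_of_length
      (by rw [hπ.length_eq, (isRanking_restrictWord hσ hC).length_eq])).symm
  · rintro rfl
    exact List.filter_sublist

end Rankings

section Marginals

variable {n : ℕ} {A B C : Finset (Fin n)}

lemma MemL.apply_eq_zero {F : Word n → ℝ} (hF : MemL A F) {w : Word n} (hw : ¬IsRanking A w) :
    F w = 0 :=
  of_not_not (mt (hF w) hw)

lemma memL_marg (B : Finset (Fin n)) (F : Word n → ℝ) : MemL B (marg B F) :=
  fun _ hw => of_not_not fun h => hw (if_neg h)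

lemma isLinearMap_marg (B : Finset (Fin n)) : IsLinearMap ℝ (marg B) where
  map_add F G := by
    ext π
    simp only [marg, Pi.add_apply]
    split_ifs
    · simp only [← Finset.sum_add_distrib, ← ite_add_zero]
    · simp
  map_smul c F := by
    ext π
    simp [marg, Finset.mul_sum]

lemma marg_sum {ι : Type*} (B : Finset (Fin n)) (s : Finset ι) (F : ι → Word n → ℝ) :
    marg B (∑ i ∈ s, F i) = ∑ i ∈ s, marg B (F i) :=
  map_sum ((isLinearMap_marg B).mk' _) F s

lemma marg_apply {F : Word n → ℝ} (hF : MemL A F) (hC : C ⊆ A) (π : Word n) :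
    marg C F π = ∑ σ ∈ rankings n A with restrictWord σ C = π, F σ := by
  by_cases hπ : IsRanking C π
  · rw [marg, if_pos hπ, ← Finset.sum_filter]
    symm
    refine Finset.sum_subset_zero_on_sdiff ?_ ?_ fun _ _ => rfl
    · intro σ
      simp only [Finset.mem_filter, mem_rankings, mem_allWords]
      exact fun ⟨hσ, h⟩ => ⟨hσ.1, (sublist_iff_restrictWord_eq hπ hσ hC).2 h⟩
    · intro σ
      simp only [Finset.mem_sdiff, Finset.mem_filter, mem_rankings, mem_allWords]
      exact fun ⟨h, h_not⟩ => hF.apply_eq_zero fun hσ =>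
        h_not ⟨hσ, (sublist_iff_restrictWord_eq hπ hσ hC).1 h.2⟩
  · rw [(memL_marg C F).apply_eq_zero hπ, Finset.filter_false_of_mem, Finset.sum_empty]
    rintro σ hσ rfl
    exact hπ (isRanking_restrictWord (mem_rankings.1 hσ) hC)

lemma marg_self {F : Word n → ℝ} (hF : MemL A F) : marg A F = F := by
  ext π
  have h_restrict : ∀ σ ∈ rankings n A, (restrictWord σ A = π ↔ σ = π) := fun σ hσ => by
    rw [restrictWord_self (mem_rankings.1 hσ)]
  rw [marg_apply hF subset_rfl, Finset.filter_congr h_restrict, Finset.sum_filter,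
    Finset.sum_ite_eq']
  exact ite_eq_left_iff.2 fun hπ => (hF.apply_eq_zero (mt mem_rankings.2 hπ)).symm

lemma marg_marg {F : Word n → ℝ} (hF : MemL A F) (hBA : B ⊆ A) (hCB : C ⊆ B) :
    marg C (marg B F) = marg C F := by
  ext π
  have h_maps : ∀ σ ∈ (rankings n A).filter (restrictWord · C = π),
      restrictWord σ B ∈ (rankings n B).filter (restrictWord · C = π) := by
    simp only [Finset.mem_filter, mem_rankings, restrictWord_restrictWord hCB]
    exact fun σ ⟨hσ, h⟩ => ⟨isRanking_restrictWord hσ hBA, h⟩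
  rw [marg_apply (memL_marg B F) hCB, marg_apply hF (hCB.trans hBA),
    ← Finset.sum_fiberwise_of_maps_to h_maps]
  refine Finset.sum_congr rfl fun τ hτ => ?_
  rw [marg_apply hF hBA, Finset.filter_filter]
  refine Finset.sum_congr (Finset.filter_congr fun σ _ => ?_) fun _ _ => rfl
  rw [iff_and_self, ← restrictWord_restrictWord hCB]
  rintro rfl
  exact (Finset.mem_filter.1 hτ).2

lemma marg_erase {F : Word n → ℝ} (hF : MemL A F) {a : Fin n} (ha : a ∈ A) :
    marg (A.erase a) F = insertSum a F := by
  ext τ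
  by_cases hτ : IsRanking (A.erase a) τ
  · have haτ : a ∉ τ := fun h => A.notMem_erase a (hτ.mem_iff.1 h)
    rw [marg_apply hF (A.erase_subset a), insertSum,
      ← List.sum_toFinset F (List.nodup_permutations'Aux_of_notMem τ a haτ)]
    refine Finset.sum_congr (Finset.ext fun σ => ?_) fun _ _ => rfl
    rw [Finset.mem_filter, mem_rankings, List.mem_toFinset, mem_permutations'Aux_iff_erase haτ]
    constructor
    · exact fun ⟨hσ, h⟩ => ⟨hσ.mem_iff.2 ha, by rw [← restrictWord_erase hσ, h]⟩
    · rintro ⟨haσ, rfl⟩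
      have hσ : IsRanking A σ := isRanking_iff_perm.2
        ((List.perm_cons_erase haσ).trans (isRanking_iff_perm.1 (isRanking_cons.2 ⟨ha, hτ⟩)))
      exact ⟨hσ, restrictWord_erase hσ a⟩
  · rw [(memL_marg _ F).apply_eq_zero hτ, insertSum, List.sum_eq_zero]
    refine List.forall_mem_map.2 fun σ hσ => hF.apply_eq_zero fun h => hτ ?_
    exact (isRanking_cons.1 (isRanking_iff_perm.2
      ((perm_of_mem_permutations'Aux hσ).symm.trans (isRanking_iff_perm.1 h)))).2

end Marginals

section Localization

variable {n : ℕ} {A B C : Finset (Fin n)}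

lemma mem_Pbar : B ∈ Pbar A ↔ B ⊆ A ∧ (2 ≤ B.card ∨ B = ∅) := by
  simp [Pbar]

lemma mem_Pbar_iff_subset (hB : B ∈ Pbar A) : B ∈ Pbar C ↔ B ⊆ C := by
  rw [mem_Pbar, and_iff_left (mem_Pbar.1 hB).2]

lemma Pbar_subset_Pbar (hBA : B ⊆ A) : Pbar B ⊆ Pbar A := fun _ hC =>
  (mem_Pbar.2 ((mem_Pbar.1 hC).imp_left hBA.trans'))

lemma marg_apply_of_card_le_one {F : Word n → ℝ} (hF : MemL A F) (hC : C ⊆ A) (h_card : C.card ≤ 1)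
    {π : Word n} (hπ : IsRanking C π) : marg C F π = ∑ σ ∈ rankings n A, F σ := by
  rw [marg_apply hF hC, Finset.filter_true_of_mem]
  intro σ hσ
  have h_perm : restrictWord σ C ~ π :=
    (isRanking_iff_perm.1 (isRanking_restrictWord (mem_rankings.1 hσ) hC)).trans
      (isRanking_iff_perm.1 hπ).symm
  rcases Nat.le_one_iff_eq_zero_or_eq_one.1 (hπ.length_eq.trans_le h_card) with h | h
  · obtain rfl := List.length_eq_zero_iff.1 h
    exact h_perm.eq_nil
  · obtain ⟨c, rfl⟩ := List.length_eq_one_iff.1 h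
    exact List.perm_singleton.1 h_perm

lemma MemH.marg_eq_zero {X : Word n → ℝ} (hX : MemH B X) (hB : B ∈ Pbar A) (hCB : C ⊂ B) :
    marg C X = 0 := by
  rcases le_or_gt 2 C.card with hC | hC
  · exact hX.2.1 C hCB hC
  have hB2 : 2 ≤ B.card :=
    (mem_Pbar.1 hB).2.resolve_right (by rintro rfl; exact Finset.not_ssubset_empty C hCB)
  ext π
  by_cases hπ : IsRanking C π
  · rw [marg_apply_of_card_le_one hX.1 hCB.1 (Nat.le_of_lt_succ hC) hπ, hX.2.2 hB2, Pi.zero_apply]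
  · exact (memL_marg C X).apply_eq_zero hπ

lemma memH_of_marg_eq_zero {X : Word n → ℝ} (hX : MemL B X)
    (h : ∀ C ∈ Pbar B, C ≠ B → marg C X = 0) : MemH B X := by
  refine ⟨hX, fun C hC h_card => h C (mem_Pbar.2 ⟨hC.1, .inl h_card⟩) hC.ne, fun hB => ?_⟩
  have h_empty : marg ∅ X = 0 := h ∅ (mem_Pbar.2 ⟨B.empty_subset, .inr rfl⟩) <| by
    rintro rfl
    simp at hB
  have h_nil : IsRanking (∅ : Finset (Fin n)) [] := by simp [IsRanking]
  rw [← marg_apply_of_card_le_one hX B.empty_subset (by simp) h_nil, h_empty, Pi.zero_apply]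

end Localization

section Synthesis

variable {n : ℕ} {A B C : Finset (Fin n)}

lemma memL_synth (A : Finset (Fin n)) (X : Word n → ℝ) : MemL A (synth A X) :=
  fun _ hw => of_not_not fun h => hw (if_neg h)

lemma synth_zero (A : Finset (Fin n)) : synth A (0 : Word n → ℝ) = 0 := by
  ext σ
  simp [synth]

-- For `B = ∅` the empty word occurs `|A| + 1` times in `σ`, and
-- `(|A| + 1) / (|A| + 1)! = 1 / |A|!`, so the separate clause for `δ_0̄` in the definition of `φ_A`
-- disappears.
lemma synth_apply {X : Word n → ℝ} (hX : MemL B X) {σ : Word n} (hσ : IsRanking A σ) :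
    synth A X σ = infixSum X σ / (A.card - B.card + 1).factorial := by
  have h_infixes (π : Word n) :
      π ∈ {π ∈ allWords n | π ≠ [] ∧ π <:+: σ} ↔ π ≠ [] ∧ π <:+: σ := by
    simp only [Finset.mem_filter, mem_allWords, and_iff_right_iff_imp]
    exact fun h => hσ.1.sublist h.2.sublist
  have h_length : ∀ {π}, X π ≠ 0 → π.length = B.card := fun h => (hX _ h).length_eq
  rw [synth, if_pos hσ, infixSum_eq_length_smul_add_sum X hσ.1 h_infixes, hσ.length_eq, add_div,
    ← Finset.sum_filter, Finset.sum_div]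
  congr 1
  · by_cases h : X [] = 0
    · simp [h]
    · rw [← h_length h, List.length_nil, Nat.sub_zero, Nat.factorial_succ, nsmul_eq_mul,
        Nat.cast_mul]
      field_simp
  · refine Finset.sum_congr rfl fun π _ => ?_
    by_cases h : X π = 0
    · simp [h]
    · rw [h_length h]

lemma synth_self {X : Word n → ℝ} (hX : MemL B X) : synth B X = X := by
  ext σ
  by_cases hσ : IsRanking B σ
  · have h_self : infixSum X σ = X σ := infixSum_eq_self fun w hw h_ne =>
      hX.apply_eq_zero fun h => h_ne (hw.eq_of_length (h.length_eq.trans hσ.length_eq.symm))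
    simp [synth_apply hX hσ, h_self]
  · rw [(memL_synth B X).apply_eq_zero hσ, hX.apply_eq_zero hσ]

lemma marg_erase_synth_apply {X : Word n → ℝ} (hX : MemL B X) {a : Fin n} (ha : a ∈ A) {τ : Word n}
    (hτ : IsRanking (A.erase a) τ) :
    marg (A.erase a) (synth A X) τ =
      insertSum a (infixSum X) τ / (A.card - B.card + 1).factorial := by
  have h_apply : ∀ σ ∈ τ.permutations'Aux a,
      synth A X σ = infixSum X σ / (A.card - B.card + 1).factorial := fun σ hσ =>
    synth_apply hX <| isRanking_iff_perm.2 <|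
      (perm_of_mem_permutations'Aux hσ).trans (isRanking_iff_perm.1 (isRanking_cons.2 ⟨ha, hτ⟩))
  rw [marg_erase (memL_synth A X) ha, insertSum, List.map_congr_left h_apply]
  simp only [insertSum, div_eq_mul_inv, List.sum_map_mul_right]

lemma marg_erase_synth_of_mem {X : Word n → ℝ} (hX : MemL B X) {a : Fin n} (haA : a ∈ A)
    (haB : a ∈ B) :
    marg (A.erase a) (synth A X) = synth (A.erase a) (marg (B.erase a) X) := by
  ext τ
  by_cases hτ : IsRanking (A.erase a) τ
  · have h_avoid : ∀ w, a ∉ w → X w = 0 := fun w haw =>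
      hX.apply_eq_zero fun hw => haw (hw.mem_iff.2 haB)
    have haτ : a ∉ τ := fun h => A.notMem_erase a (hτ.mem_iff.1 h)
    have h_card : (A.erase a).card - (B.erase a).card = A.card - B.card := by
      have := Finset.card_erase_add_one haA
      have := Finset.card_erase_add_one haB
      lia
    rw [marg_erase_synth_apply hX haA hτ, synth_apply (memL_marg _ X) hτ, marg_erase hX haB,
      insertSum_infixSum_of_mem h_avoid haτ, h_card]
  · rw [(memL_marg _ _).apply_eq_zero hτ, (memL_synth _ _).apply_eq_zero hτ]

lemma marg_erase_synth_of_notMem {X : Word n → ℝ} (hX : MemL B X) (hBA : B ⊆ A) {a : Fin n}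
    (haA : a ∈ A) (haB : a ∉ B) : marg (A.erase a) (synth A X) = synth (A.erase a) X := by
  ext τ
  by_cases hτ : IsRanking (A.erase a) τ
  · have h_contain : ∀ w, a ∈ w → X w = 0 := fun w haw =>
      hX.apply_eq_zero fun hw => haB (hw.mem_iff.1 haw)
    have h_weight : (fun w => w.length • X w) = fun w => B.card • X w := by
      ext w
      by_cases hw : IsRanking B w
      · rw [hw.length_eq]
      · simp [hX.apply_eq_zero hw]
    obtain ⟨d, hd⟩ :=
      Nat.exists_eq_add_of_le (Finset.card_le_card (Finset.subset_erase.2 ⟨hBA, haB⟩))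
    have hA_card : A.card - B.card + 1 = d + 2 := by
      have := Finset.card_erase_add_one haA
      lia
    have h_insert : insertSum a (infixSum X) τ = (d + 2) * infixSum X τ := by
      have h := insertSum_infixSum_of_notMem h_contain τ
      rw [h_weight, infixSum_nsmul, hτ.length_eq, hd] at h
      simp only [nsmul_eq_mul, Nat.cast_add, Nat.cast_ofNat] at h
      linear_combination h
    rw [marg_erase_synth_apply hX haA hτ, synth_apply hX hτ, hA_card, h_insert, hd,
      Nat.add_sub_cancel_left, Nat.factorial_succ (d + 1)]
    push_cast
    field_simp
    ring
  · rw [(memL_marg _ _).apply_eq_zero hτ, (memL_synth _ _).apply_eq_zero hτ]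

lemma marg_synth {X : Word n → ℝ} (hX : MemL B X) (hBA : B ⊆ A) (hCA : C ⊆ A) :
    marg C (synth A X) = synth C (marg (B ∩ C) X) := by
  induction A using Finset.strongInduction generalizing B X with
  | H A ih =>
    rcases hCA.eq_or_ssubset with rfl | hCA'
    · rw [Finset.inter_eq_left.2 hBA, marg_self (memL_synth C X), marg_self hX]
    obtain ⟨a, haA, haC⟩ := Finset.exists_of_ssubset hCA'
    have hCa : C ⊆ A.erase a := Finset.subset_erase.2 ⟨hCA, haC⟩
    rw [← marg_marg (memL_synth A X) (A.erase_subset a) hCa]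
    by_cases haB : a ∈ B
    · have h_inter : B.erase a ∩ C = B ∩ C := by
        rw [Finset.erase_inter, Finset.erase_eq_of_notMem fun h => haC (Finset.mem_inter.1 h).2]
      rw [marg_erase_synth_of_mem hX haA haB,
        ih _ (Finset.erase_ssubset haA) (memL_marg _ X) (Finset.erase_subset_erase a hBA) hCa,
        h_inter, marg_marg hX (B.erase_subset a) (h_inter ▸ Finset.inter_subset_left)]
    · rw [marg_erase_synth_of_notMem hX hBA haA haB,
        ih _ (Finset.erase_ssubset haA) hX (Finset.subset_erase.2 ⟨hBA, haB⟩) hCa]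

lemma MemH.marg_synth_of_subset {X : Word n → ℝ} (hX : MemH B X) (hBC : B ⊆ C) (hCA : C ⊆ A) :
    marg C (synth A X) = synth C X := by
  rw [marg_synth hX.1 (hBC.trans hCA) hCA, Finset.inter_eq_left.2 hBC, marg_self hX.1]

lemma MemH.marg_synth_of_not_subset {X : Word n → ℝ} (hX : MemH B X) (hB : B ∈ Pbar A)
    (hCA : C ⊆ A) (hBC : ¬B ⊆ C) : marg C (synth A X) = 0 := by
  rw [marg_synth hX.1 (mem_Pbar.1 hB).1 hCA, hX.marg_eq_zero hB, synth_zero]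
  exact Finset.inter_subset_left.ssubset_of_ne (mt Finset.inter_eq_left.1 hBC)

lemma marg_sum_synth {X : Finset (Fin n) → Word n → ℝ} {s : Finset (Finset (Fin n))}
    (hX : ∀ B ∈ s, MemH B (X B)) (hCA : C ⊆ A) (hCs : Pbar C ⊆ s) (hsA : s ⊆ Pbar A) :
    marg C (∑ B ∈ s, synth A (X B)) = ∑ B ∈ Pbar C, synth C (X B) := by
  rw [marg_sum]
  symm
  refine Finset.sum_subset_zero_on_sdiff hCs (fun B hB => ?_) fun B hB => ?_
  · obtain ⟨hBs, hBC⟩ := Finset.mem_sdiff.1 hB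
    exact (hX B hBs).marg_synth_of_not_subset (hsA hBs) hCA
      (mt (mem_Pbar_iff_subset (hsA hBs)).2 hBC)
  · exact ((hX B (hCs hB)).marg_synth_of_subset (mem_Pbar.1 hB).1 hCA).symm

end Synthesis

section Decomposition

variable {n : ℕ} {A C : Finset (Fin n)} {F : Word n → ℝ}

/-- The component of `F` localized on `C`: what remains of the marginal `M_C F` after removing the
contributions synthesized from the components on the proper subsets of `C`. -/
noncomputable def localComponent (F : Word n → ℝ) (C : Finset (Fin n)) : Word n → ℝ :=
  marg C F - ∑ B ∈ ((Pbar C).erase C).attach, synth C (localComponent F B)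
termination_by C.card
decreasing_by
  exact Finset.card_lt_card <|
    (mem_Pbar.1 (Finset.mem_of_mem_erase B.2)).1.ssubset_of_ne (Finset.ne_of_mem_erase B.2)

lemma localComponent_eq (F : Word n → ℝ) (C : Finset (Fin n)) :
    localComponent F C = marg C F - ∑ B ∈ (Pbar C).erase C, synth C (localComponent F B) := by
  rw [localComponent, Finset.sum_attach _ fun B => synth C (localComponent F B)]

lemma memL_localComponent (F : Word n → ℝ) (C : Finset (Fin n)) : MemL C (localComponent F C) := by
  intro w
  contrapose!
  intro hw
  rw [localComponent_eq]
  simp [(memL_marg C _).apply_eq_zero hw, (memL_synth C _).apply_eq_zero hw]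

lemma sum_synth_localComponent (F : Word n → ℝ) (hC : C ∈ Pbar A) :
    ∑ B ∈ Pbar C, synth C (localComponent F B) = marg C F := by
  rw [← Finset.add_sum_erase _ _ ((mem_Pbar_iff_subset hC).2 subset_rfl),
    synth_self (memL_localComponent F C), localComponent_eq, sub_add_cancel]

lemma memH_localComponent (hF : MemL A F) (hC : C ∈ Pbar A) : MemH C (localComponent F C) := by
  induction C using Finset.strongInduction with
  | H C ih =>
    have hCA : C ⊆ A := (mem_Pbar.1 hC).1
    refine memH_of_marg_eq_zero (memL_localComponent F C) fun D hD hDC => ?_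
    have hDC' : D ⊆ C := (mem_Pbar.1 hD).1
    have h_memH : ∀ B ∈ (Pbar C).erase C, MemH B (localComponent F B) := fun B hB =>
      have hBC := Finset.mem_of_mem_erase hB
      ih B ((mem_Pbar.1 hBC).1.ssubset_of_ne (Finset.ne_of_mem_erase hB))
        (Pbar_subset_Pbar hCA hBC)
    have h_Pbar : Pbar D ⊆ (Pbar C).erase C := Finset.subset_erase.2
      ⟨Pbar_subset_Pbar hDC', fun h => hDC (hDC'.antisymm (mem_Pbar.1 h).1)⟩
    rw [localComponent_eq, (isLinearMap_marg D).map_sub, marg_marg hF hCA hDC',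
      marg_sum_synth h_memH hDC' h_Pbar (Finset.erase_subset _ _), sum_synth_localComponent F hD,
      sub_self]

lemma eq_localComponent {X : Finset (Fin n) → Word n → ℝ} (hX : ∀ B ∈ Pbar A, MemH B (X B))
    (hF : F = ∑ B ∈ Pbar A, synth A (X B)) (hC : C ∈ Pbar A) : X C = localComponent F C := by
  induction C using Finset.strongInduction with
  | H C ih =>
    have hCA : C ⊆ A := (mem_Pbar.1 hC).1
    have h_marg : marg C F = ∑ B ∈ Pbar C, synth C (X B) := by
      rw [hF, marg_sum_synth hX hCA (Pbar_subset_Pbar hCA) subset_rfl]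
    have h_below : ∀ B ∈ (Pbar C).erase C, synth C (localComponent F B) = synth C (X B) := by
      intro B hB
      have hBC := Finset.mem_of_mem_erase hB
      rw [ih B ((mem_Pbar.1 hBC).1.ssubset_of_ne (Finset.ne_of_mem_erase hB))
        (Pbar_subset_Pbar hCA hBC)]
    rw [localComponent_eq, h_marg, Finset.sum_congr rfl h_below,
      ← Finset.add_sum_erase _ _ ((mem_Pbar_iff_subset hC).2 subset_rfl), add_sub_cancel_right,
      synth_self (hX C hC).1]

end Decomposition

/-- **MRA decomposition (existence and uniqueness).**
For every `A ⊆ [n]` with `|A| ≥ 2` and every `F ∈ L(Γ(A))`, there is a unique family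
`(X_B)_{B ∈ P̄(A)}` with `X_B ∈ H_B` such that `F = Σ_{B ∈ P̄(A)} φ_A X_B`. -/
theorem mra_decomposition {n : ℕ} (hn : 2 ≤ n) (A : Finset (Fin n)) (hA : 2 ≤ A.card)
    (F : Word n → ℝ) (hF : MemL A F) :
    ∃! X : Finset (Fin n) → Word n → ℝ,
      (∀ B ∈ Pbar A, MemH B (X B)) ∧
      (∀ B ∉ Pbar A, X B = 0) ∧
      F = ∑ B ∈ Pbar A, synth A (X B) := by
  have hAA : A ∈ Pbar A := mem_Pbar.2 ⟨subset_rfl, .inl hA⟩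
  have h_sum : ∑ B ∈ Pbar A, synth A (localComponent F B) = F := by
    rw [sum_synth_localComponent F hAA, marg_self hF]
  refine ⟨fun B => if B ∈ Pbar A then localComponent F B else 0,
    ⟨fun B hB => ?_, fun B hB => ?_, ?_⟩, fun Y ⟨hY, hY_zero, hF_eq⟩ => funext fun B => ?_⟩
  · simpa only [if_pos hB] using memH_localComponent hF hB
  · exact if_neg hB
  · exact h_sum.symm.trans (Finset.sum_congr rfl fun B hB => by simp only [if_pos hB])
  · split_ifs with hB
    · exact eq_localComponent hY hF_eq hB
    · exact hY_zero B hB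
end

section
/- Dimension of the localization spaces: for every B ⊆ [n] with |B| = k ≥ 2, the real vector space H_B has dimension d_k, the number of derangements of a k-element set. -/
open Finset
open scoped List

theorem marg_add {n : ℕ} (B : Finset (Fin n)) (F G : Word n → ℝ) :
    marg B (F + G) = marg B F + marg B G := by
  funext π
  by_cases h : IsRanking B π
  · simp only [marg, Pi.add_apply, if_pos h, ← Finset.sum_add_distrib]
    refine Finset.sum_congr rfl fun σ _ => ?_
    by_cases hs : π <+ σ <;> simp [hs]
  · simp [marg, if_neg h]

theorem marg_smul {n : ℕ} (B : Finset (Fin n)) (c : ℝ) (F : Word n → ℝ) :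
    marg B (c • F) = c • marg B F := by
  funext π
  by_cases h : IsRanking B π
  · simp only [marg, Pi.smul_apply, smul_eq_mul, if_pos h, Finset.mul_sum]
    refine Finset.sum_congr rfl fun σ _ => ?_
    by_cases hs : π <+ σ <;> simp [hs]
  · simp [marg, if_neg h]

/-- The localization space `H_B` as a submodule of `L(Γ̄_n)`. -/
noncomputable def Hspace {n : ℕ} (B : Finset (Fin n)) : Submodule ℝ (Word n → ℝ) where
  carrier := {F | MemH B F}
  zero_mem' := by
    refine ⟨?_, fun B' _ _ => ?_, fun _ => ?_⟩
    · intro w hw; simp at hw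
    · funext π; simp [marg]
    · simp
  add_mem' := by
    rintro F G ⟨hF1, hF2, hF3⟩ ⟨hG1, hG2, hG3⟩
    refine ⟨?_, ?_, ?_⟩
    · intro w hw
      by_contra h
      have h1 : F w = 0 := by by_contra h'; exact h (hF1 w h')
      have h2 : G w = 0 := by by_contra h'; exact h (hG1 w h')
      exact hw (by simp [h1, h2])
    · intro B' hsub hcard
      rw [marg_add, hF2 B' hsub hcard, hG2 B' hsub hcard, add_zero]
    · intro hc
      simp only [Pi.add_apply, Finset.sum_add_distrib, hF3 hc, hG3 hc, add_zero]
  smul_mem' := by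
    rintro c F ⟨hF1, hF2, hF3⟩
    refine ⟨?_, ?_, ?_⟩
    · intro w hw
      by_contra h
      have h1 : F w = 0 := by by_contra h'; exact h (hF1 w h')
      exact hw (by simp [h1])
    · intro B' hsub hcard
      rw [marg_smul, hF2 B' hsub hcard, smul_zero]
    · intro hc
      simp only [Pi.smul_apply, smul_eq_mul, ← Finset.mul_sum, hF3 hc, mul_zero]

/-!
Deleting a letter `a` from every word pushes a function `F ∈ L(Γ(B))` forward to a function on
`Γ(B \ {a})`, and sums of `F` over the superwords of a word avoiding `a` do not change under this
pushforward. Hence `H_B` consists of the `F ∈ L(Γ(B))` killed by the deletion of each letter of `B`.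

Impose these conditions one letter at a time. Deletions of distinct letters commute, and prepending
`b` is a right inverse of the deletion of `b` that commutes with the deletions of the other letters.
So if `K(B, S)` is the space of functions in `L(Γ(B))` killed by the deletion of each letter of `S`,
the deletion of `b ∈ B \ S` maps `K(B, S)` onto `K(B \ {b}, S)` with kernel `K(B, S ∪ {b})`. By
rank–nullity `dim K(B, S)` is the `|S|`-th forward difference of the factorial at `|B \ S|`; for
`S = B` this is the alternating sum counting derangements.
-/

theorem fwdDiff_iter_factorial_zero (n : ℕ) :
    (fwdDiff 1)^[n] (fun k : ℕ => (k.factorial : ℤ)) 0 = numDerangements n := by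
  rw [fwdDiff_iter_eq_sum_shift, numDerangements_sum, ← Finset.sum_range_reflect]
  refine Finset.sum_congr rfl fun k hk => ?_
  have hkn : k ≤ n := Nat.lt_succ_iff.1 (Finset.mem_range.1 hk)
  rw [Nat.ascFactorial_eq_factorial_mul_choose, Nat.add_sub_cancel' hkn, Nat.add_sub_cancel,
    Nat.sub_sub_self hkn, smul_eq_mul, smul_eq_mul, mul_one, zero_add]
  push_cast
  ring

section LinearAlgebra

theorem mapDomain_mem_supported {R M α β : Type*} [Semiring R] [AddCommMonoid M] [Module R M]
    {f : α → β} {s : Set α} {t : Set β} (hf : Set.MapsTo f s t) {F : α →₀ M}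
    (hF : F ∈ Finsupp.supported M R s) : Finsupp.mapDomain f F ∈ Finsupp.supported M R t :=
  Finsupp.supported_comap_lmapDomain M R f t (Finsupp.supported_mono hf hF)

theorem finrank_supported_coe {R α : Type*} [Semiring R] [StrongRankCondition R] (s : Finset α) :
    Module.finrank R (Finsupp.supported R R (s : Set α)) = #s := by
  rw [(Finsupp.supportedEquivFinsupp (M := R) (R := R) (s : Set α)).finrank_eq,
    Module.finrank_finsupp_self]
  exact Fintype.card_coe s

theorem finrank_map_add_finrank_inf_ker {K V W : Type*} [DivisionRing K] [AddCommGroup V]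
    [Module K V] [AddCommGroup W] [Module K W] (f : V →ₗ[K] W) (U : Submodule K V)
    [FiniteDimensional K U] :
    Module.finrank K (U.map f) + Module.finrank K (U ⊓ LinearMap.ker f : Submodule K V) =
      Module.finrank K U := by
  rw [← LinearMap.finrank_range_add_finrank_ker (f.domRestrict U), LinearMap.range_domRestrict,
    LinearMap.ker_domRestrict, ← Submodule.finrank_map_subtype_eq, Submodule.map_comap_subtype]

end LinearAlgebra

section Words

variable {α : Type*} [DecidableEq α]

/-- `Γ(B)` over an arbitrary alphabet: the duplicate-free words whose set of letters is `B`. -/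
def arrangements (B : Finset α) : Set (List α) := {w | w.Nodup ∧ w.toFinset = B}

theorem coe_toFinset_permutations_toList (B : Finset α) :
    (B.toList.permutations.toFinset : Set (List α)) = arrangements B := by
  ext w
  simp only [Finset.mem_coe, List.mem_toFinset, List.mem_permutations]
  constructor
  · intro h
    exact ⟨h.nodup_iff.2 B.nodup_toList,
      (List.toFinset_eq_of_perm _ _ h).trans B.toList_toFinset⟩
  · rintro ⟨hw, rfl⟩
    exact (List.toFinset_toList hw).symm

theorem card_toFinset_permutations_toList (B : Finset α) :
    #B.toList.permutations.toFinset = (#B).factorial := by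
  rw [List.toFinset_card_of_nodup (List.nodup_permutations _ B.nodup_toList),
    List.length_permutations, Finset.length_toList]

variable {B : Finset α} {w : List α}

theorem mem_iff_of_mem_arrangements (hw : w ∈ arrangements B) {a : α} : a ∈ w ↔ a ∈ B := by
  rw [← hw.2, List.mem_toFinset]

theorem length_of_mem_arrangements (hw : w ∈ arrangements B) : w.length = #B := by
  rw [← hw.2, List.toFinset_card_of_nodup hw.1]

theorem erase_mem_arrangements (a : α) (hw : w ∈ arrangements B) :
    w.erase a ∈ arrangements (B.erase a) := by
  refine ⟨hw.1.erase a, ?_⟩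
  ext x
  simp [hw.1.mem_erase_iff, mem_iff_of_mem_arrangements hw]

theorem cons_mem_arrangements {b : α} (hb : b ∈ B) (hw : w ∈ arrangements (B.erase b)) :
    b :: w ∈ arrangements B := by
  refine ⟨List.nodup_cons.2 ⟨?_, hw.1⟩, ?_⟩
  · simp [mem_iff_of_mem_arrangements hw]
  · rw [List.toFinset_cons, hw.2, Finset.insert_erase hb]

theorem sublist_erase_iff_of_notMem {a : α} {π σ : List α} (ha : a ∉ π) :
    π <+ σ.erase a ↔ π <+ σ := by
  refine ⟨fun h => h.trans List.erase_sublist, fun h => ?_⟩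
  simpa only [List.erase_of_not_mem ha] using h.erase a

end Words

section DeletionKernel

variable (R : Type*) {α : Type*} [DecidableEq α]

/-- The operator summing a function on words over the fibres of the deletion of the letter `a`.
On finitely supported functions it is a pushforward, so its identities reduce to identities between
maps of words. -/
noncomputable def letterDeletion [Semiring R] (a : α) : (List α →₀ R) →ₗ[R] List α →₀ R :=
  Finsupp.lmapDomain R R fun w => w.erase a

/-- The space `K(B, S)` of the functions in `L(Γ(B))` killed by the deletion of every letter
of `S`. It interpolates between `L(Γ(B))`, for `S = ∅`, and `H_B`, for `S = B`. -/
noncomputable def deletionKernel [Semiring R] (B S : Finset α) : Submodule R (List α →₀ R) :=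
  Finsupp.supported R R (arrangements B) ⊓ ⨅ a ∈ S, LinearMap.ker (letterDeletion R a)

section Semiring

variable {R} [Semiring R] {B S : Finset α} {F : List α →₀ R}

theorem mem_deletionKernel : F ∈ deletionKernel R B S ↔
    F ∈ Finsupp.supported R R (arrangements B) ∧ ∀ a ∈ S, letterDeletion R a F = 0 := by
  simp only [deletionKernel, Submodule.mem_inf, Submodule.mem_iInf, LinearMap.mem_ker]

theorem letterDeletion_mem_supported (a : α) (hF : F ∈ Finsupp.supported R R (arrangements B)) :
    letterDeletion R a F ∈ Finsupp.supported R R (arrangements (B.erase a)) :=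
  mapDomain_mem_supported (fun _ => erase_mem_arrangements a) hF

theorem letterDeletion_comm (a b : α) (F : List α →₀ R) :
    letterDeletion R a (letterDeletion R b F) = letterDeletion R b (letterDeletion R a F) := by
  simp only [letterDeletion, Finsupp.lmapDomain_apply, ← Finsupp.mapDomain_comp]
  congr 1
  ext1 w
  exact List.erase_comm ..

theorem letterDeletion_mapDomain_cons_self (b : α) (F : List α →₀ R) :
    letterDeletion R b (F.mapDomain (List.cons b)) = F := by
  rw [letterDeletion, Finsupp.lmapDomain_apply, ← Finsupp.mapDomain_comp]
  have h : (fun w : List α => w.erase b) ∘ List.cons b = id := by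
    ext1 w
    exact List.erase_cons_head b w
  rw [h, Finsupp.mapDomain_id]

theorem letterDeletion_mapDomain_cons_of_ne {a b : α} (hab : a ≠ b) (F : List α →₀ R) :
    letterDeletion R a (F.mapDomain (List.cons b)) =
      (letterDeletion R a F).mapDomain (List.cons b) := by
  simp only [letterDeletion, Finsupp.lmapDomain_apply, ← Finsupp.mapDomain_comp]
  congr 1
  ext1 w
  exact List.erase_cons_tail (by simpa using hab.symm)

theorem map_letterDeletion_deletionKernel {b : α} (hbB : b ∈ B) (hbS : b ∉ S) :
    (deletionKernel R B S).map (letterDeletion R b) = deletionKernel R (B.erase b) S := by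
  ext G
  simp only [Submodule.mem_map, mem_deletionKernel]
  constructor
  · rintro ⟨F, ⟨hF, hS⟩, rfl⟩
    refine ⟨letterDeletion_mem_supported b hF, fun a ha => ?_⟩
    rw [letterDeletion_comm, hS a ha, map_zero]
  · rintro ⟨hG, hS⟩
    refine ⟨G.mapDomain (List.cons b),
      ⟨mapDomain_mem_supported (fun _ => cons_mem_arrangements hbB) hG, fun a ha => ?_⟩,
      letterDeletion_mapDomain_cons_self b G⟩
    rw [letterDeletion_mapDomain_cons_of_ne (ne_of_mem_of_not_mem ha hbS), hS a ha,
      Finsupp.mapDomain_zero]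

theorem deletionKernel_insert (b : α) :
    deletionKernel R B (insert b S) =
      deletionKernel R B S ⊓ LinearMap.ker (letterDeletion R b) := by
  rw [deletionKernel, Finset.iInf_insert, inf_comm (LinearMap.ker _), ← inf_assoc, deletionKernel]

theorem deletionKernel_empty :
    deletionKernel R B ∅ = Finsupp.supported R R (arrangements B) := by
  simp only [deletionKernel, Finset.notMem_empty, iInf_false, iInf_top, inf_top_eq]

end Semiring

section Dimension

variable (K : Type*) [DivisionRing K]

instance finiteDimensional_deletionKernel (B S : Finset α) :
    FiniteDimensional K (deletionKernel K B S) := by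
  have : FiniteDimensional K (deletionKernel K B ∅) := by
    rw [deletionKernel_empty, ← coe_toFinset_permutations_toList]
    exact (Finsupp.supportedEquivFinsupp _).symm.finiteDimensional
  refine Submodule.finiteDimensional_of_le (S₂ := deletionKernel K B ∅) fun F hF => ?_
  exact mem_deletionKernel.2 ⟨(mem_deletionKernel.1 hF).1, by simp⟩

theorem finrank_deletionKernel_empty (B : Finset α) :
    Module.finrank K (deletionKernel K B ∅) = (#B).factorial := by
  rw [deletionKernel_empty, ← coe_toFinset_permutations_toList, finrank_supported_coe,
    card_toFinset_permutations_toList]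

theorem finrank_deletionKernel_erase_add_insert {B S : Finset α} {b : α} (hbB : b ∈ B)
    (hbS : b ∉ S) :
    Module.finrank K (deletionKernel K (B.erase b) S) +
      Module.finrank K (deletionKernel K B (insert b S)) =
        Module.finrank K (deletionKernel K B S) := by
  rw [← map_letterDeletion_deletionKernel hbB hbS, deletionKernel_insert,
    finrank_map_add_finrank_inf_ker]

theorem finrank_deletionKernel {B S : Finset α} (hSB : S ⊆ B) :
    (Module.finrank K (deletionKernel K B S) : ℤ) =
      (fwdDiff 1)^[#S] (fun k : ℕ => (k.factorial : ℤ)) #(B \ S) := by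
  induction S using Finset.induction_on generalizing B with
  | empty => simp [finrank_deletionKernel_empty]
  | insert b S hbS ih =>
    obtain ⟨hbB, hSB⟩ := Finset.insert_subset_iff.1 hSB
    have hcard : #(B.erase b \ S) + 1 = #(B \ S) := by
      rw [Finset.erase_sdiff_comm, Finset.card_erase_add_one (Finset.mem_sdiff.2 ⟨hbB, hbS⟩)]
    have hrank := finrank_deletionKernel_erase_add_insert K hbB hbS
    have herase := ih (Finset.subset_erase.2 ⟨hSB, hbS⟩)
    have hB := ih hSB
    rw [Finset.card_insert_of_notMem hbS, Function.iterate_succ_apply', fwdDiff,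
      Finset.sdiff_insert, ← Finset.erase_sdiff_comm, hcard, ← hB, ← herase]
    omega

end Dimension

end DeletionKernel

section SuperwordSum

variable (R : Type*) [Semiring R] {α : Type*} [DecidableEq α]

/-- The sum of `F` over the words having `π` as a subword. For `π ∈ Γ(A)` it is the value
at `π` of the marginal of `F` on `A`. -/
noncomputable def superwordSum (π : List α) : (List α →₀ R) →ₗ[R] R :=
  Finsupp.linearCombination R fun σ => if π <+ σ then 1 else 0

variable {R} {B : Finset α} {F : List α →₀ R} {π : List α}

theorem superwordSum_eq_sum {s : Finset (List α)} (hF : F ∈ Finsupp.supported R R (s : Set _)) :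
    superwordSum R π F = ∑ σ ∈ s, if π <+ σ then F σ else 0 := by
  simp [superwordSum, Finsupp.linearCombination_apply_of_mem_supported R hF]

theorem superwordSum_congr (hF : F ∈ Finsupp.supported R R (arrangements B)) {π τ : List α}
    (h : ∀ σ ∈ arrangements B, π <+ σ ↔ τ <+ σ) : superwordSum R π F = superwordSum R τ F := by
  simp only [superwordSum, Finsupp.linearCombination_apply]
  exact Finsupp.sum_congr fun σ hσ => by simp only [h σ (hF hσ)]

theorem superwordSum_eq_apply (hF : F ∈ Finsupp.supported R R (arrangements B))
    (hπ : π ∈ arrangements B) : superwordSum R π F = F π := by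
  have hsub : ∀ σ ∈ arrangements B, π <+ σ ↔ π = σ := fun σ hσ =>
    ⟨fun h => h.eq_of_length
      ((length_of_mem_arrangements hπ).trans (length_of_mem_arrangements hσ).symm),
      fun h => h ▸ List.Sublist.refl π⟩
  rw [← coe_toFinset_permutations_toList] at hF hπ hsub
  rw [superwordSum_eq_sum hF, Finset.sum_congr rfl fun σ hσ => if_congr (hsub σ hσ) rfl rfl,
    Finset.sum_ite_eq, if_pos (Finset.mem_coe.1 hπ)]

theorem superwordSum_eq_superwordSum_nil (hF : F ∈ Finsupp.supported R R (arrangements B))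
    (hπB : π.toFinset ⊆ B) (hπ : π.length ≤ 1) : superwordSum R π F = superwordSum R [] F := by
  refine superwordSum_congr hF fun σ hσ => iff_of_true ?_ σ.nil_sublist
  obtain rfl | ⟨x, rfl⟩ : π = [] ∨ ∃ x, π = [x] := by
    rwa [Nat.le_one_iff_eq_zero_or_eq_one, List.length_eq_zero_iff, List.length_eq_one_iff] at hπ
  · exact σ.nil_sublist
  · exact List.singleton_sublist.2 ((mem_iff_of_mem_arrangements hσ).2 (hπB (by simp)))

theorem superwordSum_letterDeletion {a : α} (ha : a ∉ π) (F : List α →₀ R) :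
    superwordSum R π (letterDeletion R a F) = superwordSum R π F := by
  simp only [superwordSum, letterDeletion, Finsupp.lmapDomain_apply,
    Finsupp.linearCombination_mapDomain, Function.comp_def, sublist_erase_iff_of_notMem ha]

theorem mem_deletionKernel_self_iff : F ∈ deletionKernel R B B ↔
    F ∈ Finsupp.supported R R (arrangements B) ∧
      ∀ A ⊂ B, ∀ π ∈ arrangements A, superwordSum R π F = 0 := by
  refine mem_deletionKernel.trans (and_congr_right fun hF => ⟨fun hdel A hA π hπ => ?_,
    fun hsum a ha => ?_⟩)
  · obtain ⟨a, haB, haA⟩ := Finset.exists_of_ssubset hA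
    rw [← superwordSum_letterDeletion (mt (mem_iff_of_mem_arrangements hπ).1 haA), hdel a haB,
      map_zero]
  · have hdel := letterDeletion_mem_supported a hF
    ext π
    by_cases hπ : π ∈ arrangements (B.erase a)
    · have haπ : a ∉ π := by simp [mem_iff_of_mem_arrangements hπ]
      rw [← superwordSum_eq_apply hdel hπ, superwordSum_letterDeletion haπ]
      exact hsum _ (Finset.erase_ssubset ha) π hπ
    · exact (Finsupp.mem_supported' R _).1 hdel π hπ

end SuperwordSum

section Localization

variable {n : ℕ} {B : Finset (Fin n)} {F : Word n →₀ ℝ}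

theorem coe_rankings (B : Finset (Fin n)) : (rankings n B : Set (Word n)) = arrangements B :=
  coe_toFinset_permutations_toList B

theorem memL_coe_iff : MemL B F ↔ F ∈ Finsupp.supported ℝ ℝ (arrangements B) := by
  simp only [MemL, Finsupp.mem_supported, Set.subset_def, Finset.mem_coe, Finsupp.mem_support_iff]
  rfl

theorem marg_apply_eq_superwordSum (hF : F ∈ Finsupp.supported ℝ ℝ (arrangements B))
    {A : Finset (Fin n)} {π : Word n} (hπ : π ∈ arrangements A) :
    marg A F π = superwordSum ℝ π F := by
  have hsub : arrangements B ⊆ (allWords n : Set (Word n)) := by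
    rw [← coe_rankings, allWords]
    exact_mod_cast Finset.subset_biUnion_of_mem _ (Finset.mem_univ B)
  rw [superwordSum_eq_sum (Finsupp.supported_mono hsub hF)]
  exact if_pos hπ

theorem marg_eq_zero_iff (hF : F ∈ Finsupp.supported ℝ ℝ (arrangements B)) (A : Finset (Fin n)) :
    marg A F = 0 ↔ ∀ π ∈ arrangements A, superwordSum ℝ π F = 0 := by
  refine ⟨fun h π hπ => by rw [← marg_apply_eq_superwordSum hF hπ, h, Pi.zero_apply], fun h => ?_⟩
  ext π
  by_cases hπ : π ∈ arrangements A
  · rw [marg_apply_eq_superwordSum hF hπ, h π hπ, Pi.zero_apply]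
  · exact if_neg hπ

theorem sum_rankings_eq_superwordSum_nil (hF : F ∈ Finsupp.supported ℝ ℝ (arrangements B)) :
    ∑ π ∈ rankings n B, F π = superwordSum ℝ [] F := by
  rw [superwordSum_eq_sum (s := rankings n B) (by rwa [coe_rankings])]
  simp

theorem memH_coe_iff_mem_deletionKernel (hB : 2 ≤ #B) :
    MemH B F ↔ F ∈ deletionKernel ℝ B B := by
  rw [mem_deletionKernel_self_iff, MemH, memL_coe_iff]
  refine and_congr_right fun hF => ?_
  rw [sum_rankings_eq_superwordSum_nil hF]
  simp only [marg_eq_zero_iff hF]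
  refine ⟨fun ⟨hmarg, hsum⟩ A hA π hπ => ?_, fun h => ⟨fun A hA _ => h A hA, fun _ => ?_⟩⟩
  · by_cases hcard : 2 ≤ #A
    · exact hmarg A hA hcard π hπ
    · have hlen := length_of_mem_arrangements hπ
      rw [superwordSum_eq_superwordSum_nil hF (hπ.2 ▸ hA.1) (by omega), hsum hB]
  · exact h ∅ (Finset.card_pos.1 (by omega)).empty_ssubset [] ⟨List.nodup_nil, rfl⟩

theorem Hspace_eq_map_deletionKernel (hB : 2 ≤ #B) :
    Hspace B = (deletionKernel ℝ B B).map Finsupp.lcoeFun := by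
  ext F
  constructor
  · intro hF
    let G : Word n →₀ ℝ := Finsupp.onFinset (rankings n B) F fun w hw =>
      Finset.mem_coe.1 (coe_rankings B ▸ hF.1 w hw)
    exact ⟨G, (memH_coe_iff_mem_deletionKernel hB).1 hF, rfl⟩
  · rintro ⟨F, hF, rfl⟩
    exact (memH_coe_iff_mem_deletionKernel hB).2 hF

end Localization

/-- **Dimension of the localization spaces:** `dim H_B = d_{|B|}`, the number of derangements
of a set with `|B|` elements. -/
theorem finrank_Hspace {n : ℕ} (hn : 2 ≤ n) (B : Finset (Fin n)) (hB : 2 ≤ B.card) :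
    Module.finrank ℝ (Hspace B) = numDerangements B.card := by
  have hdim := finrank_deletionKernel ℝ (Finset.Subset.refl B)
  rw [Finset.sdiff_self, Finset.card_empty, fwdDiff_iter_factorial_zero, Nat.cast_inj] at hdim
  rw [Hspace_eq_map_deletionKernel hB, ← hdim]
  exact (Submodule.equivMapOfInjective _ DFunLike.coe_injective _).symm.finrank_eq
end
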